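/- Second variation formula: for every ε > 0, every periodic configuration (u, A), and all smooth ℤ²-periodic v : ℝ² → ℂ and a = (a₁, a₂) : ℝ² → ℝ², the second derivative at t = 0 of t ↦ E_ε(u + t·v, A + t·a) equals ∫_{[0,1]²} [ 2ε²·(∂₁a₂ − ∂₂a₁)² + 2(|D₁v|² + |D₂v|²) − 4·( a₁·(Re(i·u·conj(D₁v)) + Re(i·v·conj(D₁u))) + a₂·(Re(i·u·conj(D₂v)) + Re(i·v·conj(D₂u))) ) + 2|u|²(a₁² + a₂²) + ((|u|² − 1)/ε²)·|v|² + (2/ε²)·(Re(u·conj(v)))² ]. -/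

import Mathlib

open MeasureTheory Complex

noncomputable section

/-- Partial derivative in the first coordinate direction. -/
def pd1 {E : Type*} [NormedAddCommGroup E] [NormedSpace ℝ E] (f : ℝ × ℝ → E) (x : ℝ × ℝ) : E :=
  fderiv ℝ f x (1, 0)

/-- Partial derivative in the second coordinate direction. -/
def pd2 {E : Type*} [NormedAddCommGroup E] [NormedSpace ℝ E] (f : ℝ × ℝ → E) (x : ℝ × ℝ) : E :=
  fderiv ℝ f x (0, 1)

/-- First covariant derivative `D₁f = ∂₁f − iA₁f`. -/
def D1 (A1 : ℝ × ℝ → ℝ) (f : ℝ × ℝ → ℂ) (x : ℝ × ℝ) : ℂ :=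
  pd1 f x - Complex.I * (A1 x) * f x

/-- Second covariant derivative `D₂f = ∂₂f − iA₂f`. -/
def D2 (A2 : ℝ × ℝ → ℝ) (f : ℝ × ℝ → ℂ) (x : ℝ × ℝ) : ℂ :=
  pd2 f x - Complex.I * (A2 x) * f x

/-- Curvature function `F = ∂₁A₂ − ∂₂A₁`. -/
def curv (A1 A2 : ℝ × ℝ → ℝ) (x : ℝ × ℝ) : ℝ := pd1 A2 x - pd2 A1 x

/-- `h = (1 − |u|²)/(2ε²)`. -/
def hfun (ε : ℝ) (u : ℝ × ℝ → ℂ) (x : ℝ × ℝ) : ℝ := (1 - ‖u x‖ ^ 2) / (2 * ε ^ 2)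

/-- `σ₊ = D₁u + iD₂u`. -/
def sigP (u : ℝ × ℝ → ℂ) (A1 A2 : ℝ × ℝ → ℝ) (x : ℝ × ℝ) : ℂ :=
  D1 A1 u x + Complex.I * D2 A2 u x

/-- `σ₋ = D₁u − iD₂u`. -/
def sigM (u : ℝ × ℝ → ℂ) (A1 A2 : ℝ × ℝ → ℝ) (x : ℝ × ℝ) : ℂ :=
  D1 A1 u x - Complex.I * D2 A2 u x

/-- The Yang--Mills--Higgs energy over the fundamental domain `[0,1]²`. -/
def energy (ε : ℝ) (u : ℝ × ℝ → ℂ) (A1 A2 : ℝ × ℝ → ℝ) : ℝ :=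
  ∫ x in Set.Icc (0:ℝ) 1 ×ˢ Set.Icc (0:ℝ) 1,
    (ε ^ 2 * curv A1 A2 x ^ 2 + ‖D1 A1 u x‖ ^ 2 + ‖D2 A2 u x‖ ^ 2
      + (1 - ‖u x‖ ^ 2) ^ 2 / (4 * ε ^ 2))

/-- `ℤ²`-periodicity. -/
def Periodic2 {E : Type*} (f : ℝ × ℝ → E) : Prop :=
  ∀ x : ℝ × ℝ, f (x.1 + 1, x.2) = f x ∧ f (x.1, x.2 + 1) = f x

/-- The Yang--Mills--Higgs equations on all of `ℝ²`. -/
def IsYMH (ε : ℝ) (u : ℝ × ℝ → ℂ) (A1 A2 : ℝ × ℝ → ℝ) : Prop :=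
  (∀ x, -(D1 A1 (D1 A1 u) x + D2 A2 (D2 A2 u) x) = (hfun ε u x : ℂ) * u x) ∧
  (∀ x, ε ^ 2 * pd2 (curv A1 A2) x = ((starRingEnd ℂ) (u x) * D1 A1 u x).im) ∧
  (∀ x, ε ^ 2 * pd1 (curv A1 A2) x = -((starRingEnd ℂ) (u x) * D2 A2 u x).im)

/-- The Yang--Mills--Higgs equations on an open set `U ⊆ ℝ²`. -/
def IsYMHOn (ε : ℝ) (u : ℝ × ℝ → ℂ) (A1 A2 : ℝ × ℝ → ℝ) (U : Set (ℝ × ℝ)) : Prop :=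
  (∀ x ∈ U, -(D1 A1 (D1 A1 u) x + D2 A2 (D2 A2 u) x) = (hfun ε u x : ℂ) * u x) ∧
  (∀ x ∈ U, ε ^ 2 * pd2 (curv A1 A2) x = ((starRingEnd ℂ) (u x) * D1 A1 u x).im) ∧
  (∀ x ∈ U, ε ^ 2 * pd1 (curv A1 A2) x = -((starRingEnd ℂ) (u x) * D2 A2 u x).im)

/-- Stability: nonnegative second variation of the energy along all smooth periodic
variations of the section and the connection. -/
def Stable (ε : ℝ) (u : ℝ × ℝ → ℂ) (A1 A2 : ℝ × ℝ → ℝ) : Prop :=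
  ∀ v : ℝ × ℝ → ℂ, ∀ a1 a2 : ℝ × ℝ → ℝ,
    ContDiff ℝ (⊤ : ℕ∞) v → Periodic2 v → ContDiff ℝ (⊤ : ℕ∞) a1 → Periodic2 a1 →
    ContDiff ℝ (⊤ : ℕ∞) a2 → Periodic2 a2 →
    0 ≤ iteratedDeriv 2 (fun t : ℝ =>
      energy ε (fun x => u x + t • v x)
        (fun x => A1 x + t * a1 x) (fun x => A2 x + t * a2 x)) 0

/-!
The energy density is the pointwise squared norm of the field `(εF, D₁u, D₂u, εh)`, where
`h = (1 − |u|²)/(2ε²)`. Along the line `(u + tv, A + ta)` this field is a quadratic polynomial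
`P + tQ + t²R`, so the energy is `‖P + tQ + t²R‖²` in the Hilbert space `L²`, with second derivative
`2‖Q‖² + 4⟪P, R⟫` at `t = 0`. Writing this out pointwise gives the integrand.
-/

open scoped ComplexConjugate InnerProductSpace

lemma hasDerivAt_quadratic {E : Type*} [NormedAddCommGroup E] [NormedSpace ℝ E] (p q r : E)
    (t : ℝ) :
    HasDerivAt (fun s : ℝ => p + s • q + s ^ 2 • r) (q + (2 * t) • r) t := by
  have linear : HasDerivAt (fun s : ℝ => s • q) q t := by
    simpa using (hasDerivAt_id t).smul_const q
  have quadratic : HasDerivAt (fun s : ℝ => s ^ 2 • r) ((2 * t) • r) t := by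
    simpa using (hasDerivAt_pow 2 t).smul_const r
  exact (linear.const_add p).add quadratic

section QuadraticCurve

variable {E : Type*} [NormedAddCommGroup E] [InnerProductSpace ℝ E]

lemma iteratedDeriv_two_norm_sq_quadratic (p q r : E) :
    iteratedDeriv 2 (fun t : ℝ => ‖p + t • q + t ^ 2 • r‖ ^ 2) 0 =
      2 * ‖q‖ ^ 2 + 4 * ⟪p, r⟫_ℝ := by
  have first_deriv : deriv (fun t : ℝ => ‖p + t • q + t ^ 2 • r‖ ^ 2) =
      fun t => 2 * ⟪p + t • q + t ^ 2 • r, q + (2 * t) • r⟫_ℝ :=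
    funext fun t => (hasDerivAt_quadratic p q r t).norm_sq.deriv
  have velocity_deriv : HasDerivAt (fun t : ℝ => q + (2 * t) • r) ((2 : ℝ) • r) 0 := by
    simpa using (((hasDerivAt_id (0 : ℝ)).const_mul 2).smul_const r).const_add q
  have second_deriv := ((hasDerivAt_quadratic p q r 0).inner ℝ velocity_deriv).const_mul 2
  rw [iteratedDeriv_succ', iteratedDeriv_one, first_deriv, second_deriv.deriv]
  simp only [zero_smul, mul_zero, ne_eq, OfNat.ofNat_ne_zero, not_false_eq_true, zero_pow,
    add_zero, inner_smul_right, real_inner_self_eq_norm_sq]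
  ring

variable {X : Type*} [MeasurableSpace X] {μ : Measure X}

lemma inner_toLp_toLp {f g : X → E} (hf : MemLp f 2 μ) (hg : MemLp g 2 μ) :
    ⟪hf.toLp f, hg.toLp g⟫_ℝ = ∫ x, ⟪f x, g x⟫_ℝ ∂μ := by
  rw [L2.inner_def]
  refine integral_congr_ae ?_
  filter_upwards [hf.coeFn_toLp, hg.coeFn_toLp] with x hfx hgx
  rw [hfx, hgx]

lemma norm_sq_toLp {f : X → E} (hf : MemLp f 2 μ) :
    ‖hf.toLp f‖ ^ 2 = ∫ x, ‖f x‖ ^ 2 ∂μ := by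
  simp only [← real_inner_self_eq_norm_sq, inner_toLp_toLp]

lemma integrable_inner_of_memLp_two {f g : X → E} (hf : MemLp f 2 μ) (hg : MemLp g 2 μ) :
    Integrable (fun x => ⟪f x, g x⟫_ℝ) μ := by
  refine (L2.integrable_inner (𝕜 := ℝ) (hf.toLp f) (hg.toLp g)).congr ?_
  filter_upwards [hf.coeFn_toLp, hg.coeFn_toLp] with x hfx hgx
  rw [hfx, hgx]

lemma iteratedDeriv_two_integral_norm_sq_quadratic {p q r : X → E}
    (hp : MemLp p 2 μ) (hq : MemLp q 2 μ) (hr : MemLp r 2 μ) :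
    iteratedDeriv 2 (fun t : ℝ => ∫ x, ‖p x + t • q x + t ^ 2 • r x‖ ^ 2 ∂μ) 0 =
      ∫ x, (2 * ‖q x‖ ^ 2 + 4 * ⟪p x, r x⟫_ℝ) ∂μ := by
  have curve_eq (t : ℝ) : ∫ x, ‖p x + t • q x + t ^ 2 • r x‖ ^ 2 ∂μ =
      ‖hp.toLp p + t • hq.toLp q + t ^ 2 • hr.toLp r‖ ^ 2 :=
    (norm_sq_toLp ((hp.add (hq.const_smul t)).add (hr.const_smul (t ^ 2)))).symm
  simp only [curve_eq]
  rw [iteratedDeriv_two_norm_sq_quadratic, norm_sq_toLp, inner_toLp_toLp,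
    integral_add (hq.norm.integrable_sq.const_mul 2)
      ((integrable_inner_of_memLp_two hp hr).const_mul 4),
    integral_const_mul, integral_const_mul]

end QuadraticCurve

lemma memLp_restrict_of_isCompact {X E : Type*} [TopologicalSpace X] [MeasurableSpace X]
    [OpensMeasurableSpace X] [T2Space X] [NormedAddCommGroup E] {μ : Measure X}
    [IsFiniteMeasureOnCompacts μ] {K : Set X} (hK : IsCompact K) {f : X → E}
    (hf : ContinuousOn f K) (p : ENNReal) : MemLp f p (μ.restrict K) := by
  obtain ⟨C, hC⟩ := hK.exists_bound_of_continuousOn hf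
  have : IsFiniteMeasure (μ.restrict K) := ⟨by simpa using hK.measure_lt_top⟩
  exact .of_bound (hf.aestronglyMeasurable_of_isCompact hK hK.measurableSet) C
    (ae_restrict_of_forall_mem hK.measurableSet hC)

lemma norm_add_smul_sq (z w : ℂ) (t : ℝ) :
    ‖z + t • w‖ ^ 2 = ‖z‖ ^ 2 + 2 * t * (z * conj w).re + t ^ 2 * ‖w‖ ^ 2 := by
  simp only [Complex.sq_norm, normSq_apply, add_re, add_im, smul_re, smul_im, smul_eq_mul,
    mul_re, conj_re, conj_im]
  ring

lemma inner_ofReal_ofReal (r s : ℝ) : ⟪(r : ℂ), (s : ℂ)⟫_ℝ = r * s := by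
  simp [Complex.inner, mul_comm]

lemma two_mul_norm_sub_sq_add_four_mul_inner (Du Dv u v : ℂ) (a : ℝ) :
    2 * ‖Dv - I * a * u‖ ^ 2 + 4 * ⟪Du, -(I * a * v)⟫_ℝ =
      2 * ‖Dv‖ ^ 2 - 4 * (a * ((I * u * conj Dv).re + (I * v * conj Du).re))
        + 2 * ‖u‖ ^ 2 * a ^ 2 := by
  simp only [Complex.sq_norm, normSq_apply, Complex.inner, sub_re, sub_im, neg_re, neg_im, mul_re,
    mul_im, I_re, I_im, ofReal_re, ofReal_im, conj_re, conj_im]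
  ring

section DirectionalDerivative

variable {V E : Type*} [NormedAddCommGroup V] [NormedSpace ℝ V]
  [NormedAddCommGroup E] [NormedSpace ℝ E]

lemma fderiv_add_smul_apply {f g : V → E} {x : V} (hf : DifferentiableAt ℝ f x)
    (hg : DifferentiableAt ℝ g x) (t : ℝ) (w : V) :
    fderiv ℝ (fun y => f y + t • g y) x w = fderiv ℝ f x w + t • fderiv ℝ g x w := by
  rw [fderiv_fun_add hf (hg.fun_const_smul t), fderiv_fun_const_smul hg]
  rfl

/-- The covariant derivative `∂_w f − iAf` in the direction `w`, where `A` is the component of the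
connection in that direction; `D1` and `D2` are the cases `w = (1, 0)` and `w = (0, 1)`. -/
def covDeriv (w : V) (A : V → ℝ) (f : V → ℂ) (x : V) : ℂ :=
  fderiv ℝ f x w - I * A x * f x

lemma continuous_covDeriv {w : V} {A : V → ℝ} {f : V → ℂ} (hA : Continuous A)
    (hf : ContDiff ℝ 1 f) : Continuous (covDeriv w A f) := by
  have := hf.continuous
  have := hf.continuous_fderiv_apply (by simp)
  unfold covDeriv
  fun_prop

lemma covDeriv_add_smul {u v : V → ℂ} {x : V} (hu : DifferentiableAt ℝ u x)
    (hv : DifferentiableAt ℝ v x) (w : V) (A a : V → ℝ) (t : ℝ) :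
    covDeriv w (fun y => A y + t * a y) (fun y => u y + t • v y) x =
      covDeriv w A u x + t • (covDeriv w A v x - I * a x * u x) + t ^ 2 • (-(I * a x * v x)) := by
  rw [covDeriv, fderiv_add_smul_apply hu hv]
  simp only [covDeriv, real_smul]
  push_cast
  ring

end DirectionalDerivative

lemma D1_eq_covDeriv (A : ℝ × ℝ → ℝ) (f : ℝ × ℝ → ℂ) : D1 A f = covDeriv (1, 0) A f := rfl

lemma D2_eq_covDeriv (A : ℝ × ℝ → ℝ) (f : ℝ × ℝ → ℂ) : D2 A f = covDeriv (0, 1) A f := rfl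

lemma continuous_curv {A1 A2 : ℝ × ℝ → ℝ} (hA1 : ContDiff ℝ 1 A1) (hA2 : ContDiff ℝ 1 A2) :
    Continuous (curv A1 A2) :=
  ((hA2.continuous_fderiv (by simp)).clm_apply continuous_const).sub
    ((hA1.continuous_fderiv (by simp)).clm_apply continuous_const)

lemma curv_add_smul {A1 A2 a1 a2 : ℝ × ℝ → ℝ} {x : ℝ × ℝ} (hA1 : DifferentiableAt ℝ A1 x)
    (hA2 : DifferentiableAt ℝ A2 x) (ha1 : DifferentiableAt ℝ a1 x)
    (ha2 : DifferentiableAt ℝ a2 x) (t : ℝ) :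
    curv (fun y => A1 y + t * a1 y) (fun y => A2 y + t * a2 y) x =
      curv A1 A2 x + t * curv a1 a2 x := by
  have h1 := fderiv_add_smul_apply hA1 ha1 t (0, 1)
  have h2 := fderiv_add_smul_apply hA2 ha2 t (1, 0)
  simp only [smul_eq_mul] at h1 h2
  simp only [curv, pd1, pd2, h1, h2]
  ring

lemma hfun_add_smul (ε : ℝ) (u v : ℝ × ℝ → ℂ) (t : ℝ) (x : ℝ × ℝ) :
    hfun ε (fun y => u y + t • v y) x =
      hfun ε u x - t * ((u x * conj (v x)).re / ε ^ 2) - t ^ 2 * (‖v x‖ ^ 2 / (2 * ε ^ 2)) := by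
  simp only [hfun, norm_add_smul_sq]
  ring

/-- The Yang--Mills--Higgs energy density, the integrand of `energy`; it can be integrated over
any region of the plane. -/
def energyDensity (ε : ℝ) (u : ℝ × ℝ → ℂ) (A1 A2 : ℝ × ℝ → ℝ) (x : ℝ × ℝ) : ℝ :=
  ε ^ 2 * curv A1 A2 x ^ 2 + ‖D1 A1 u x‖ ^ 2 + ‖D2 A2 u x‖ ^ 2
    + (1 - ‖u x‖ ^ 2) ^ 2 / (4 * ε ^ 2)

/-- The integrand of the second variation of `energy` at `(u, A)` in the direction `(v, a)`. -/
def secondVariationDensity (ε : ℝ) (u : ℝ × ℝ → ℂ) (A1 A2 : ℝ × ℝ → ℝ)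
    (v : ℝ × ℝ → ℂ) (a1 a2 : ℝ × ℝ → ℝ) (x : ℝ × ℝ) : ℝ :=
  2 * ε ^ 2 * (pd1 a2 x - pd2 a1 x) ^ 2
    + 2 * (‖D1 A1 v x‖ ^ 2 + ‖D2 A2 v x‖ ^ 2)
    - 4 * (a1 x * ((I * u x * conj (D1 A1 v x)).re + (I * v x * conj (D1 A1 u x)).re)
          + a2 x * ((I * u x * conj (D2 A2 v x)).re + (I * v x * conj (D2 A2 u x)).re))
    + 2 * ‖u x‖ ^ 2 * (a1 x ^ 2 + a2 x ^ 2)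
    + (‖u x‖ ^ 2 - 1) / ε ^ 2 * ‖v x‖ ^ 2
    + 2 / ε ^ 2 * (u x * conj (v x)).re ^ 2

/-- The field `(εF, D₁u, D₂u, εh)`, whose pointwise squared norm is the energy density. The real
components are embedded in `ℂ` so that the field takes values in a single Euclidean space. -/
def energyField (ε : ℝ) (u : ℝ × ℝ → ℂ) (A1 A2 : ℝ × ℝ → ℝ) (x : ℝ × ℝ) :
    EuclideanSpace ℂ (Fin 4) :=
  !₂[((ε * curv A1 A2 x : ℝ) : ℂ), D1 A1 u x, D2 A2 u x, ((ε * hfun ε u x : ℝ) : ℂ)]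

/-- The coefficient of `t` in `energyField` along the line `(u + tv, A + ta)`. -/
def energyFieldLinearCoeff (ε : ℝ) (u : ℝ × ℝ → ℂ) (A1 A2 : ℝ × ℝ → ℝ)
    (v : ℝ × ℝ → ℂ) (a1 a2 : ℝ × ℝ → ℝ) (x : ℝ × ℝ) : EuclideanSpace ℂ (Fin 4) :=
  !₂[((ε * curv a1 a2 x : ℝ) : ℂ), D1 A1 v x - I * a1 x * u x, D2 A2 v x - I * a2 x * u x,
    ((-(ε * ((u x * conj (v x)).re / ε ^ 2)) : ℝ) : ℂ)]

/-- The coefficient of `t ^ 2` in `energyField` along the line `(u + tv, A + ta)`. -/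
def energyFieldQuadraticCoeff (ε : ℝ) (v : ℝ × ℝ → ℂ) (a1 a2 : ℝ × ℝ → ℝ) (x : ℝ × ℝ) :
    EuclideanSpace ℂ (Fin 4) :=
  !₂[0, -(I * a1 x * v x), -(I * a2 x * v x), ((-(ε * (‖v x‖ ^ 2 / (2 * ε ^ 2))) : ℝ) : ℂ)]

section Variation

variable {ε : ℝ} {u v : ℝ × ℝ → ℂ} {A1 A2 a1 a2 : ℝ × ℝ → ℝ}

lemma energyDensity_eq_norm_sq (x : ℝ × ℝ) :
    energyDensity ε u A1 A2 x = ‖energyField ε u A1 A2 x‖ ^ 2 := by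
  have potential : (ε * hfun ε u x) ^ 2 = (1 - ‖u x‖ ^ 2) ^ 2 / (4 * ε ^ 2) := by
    simp only [hfun]
    field_simp
    ring
  simp only [EuclideanSpace.norm_sq_eq, Fin.sum_univ_four, energyField, energyDensity,
    ← potential]
  simp only [Matrix.cons_val, norm_real, Real.norm_eq_abs, sq_abs, mul_pow]

lemma energyField_add_smul (hu : Differentiable ℝ u) (hA1 : Differentiable ℝ A1)
    (hA2 : Differentiable ℝ A2) (hv : Differentiable ℝ v) (ha1 : Differentiable ℝ a1)
    (ha2 : Differentiable ℝ a2) (t : ℝ) (x : ℝ × ℝ) :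
    energyField ε (fun y => u y + t • v y) (fun y => A1 y + t * a1 y)
        (fun y => A2 y + t * a2 y) x =
      energyField ε u A1 A2 x + t • energyFieldLinearCoeff ε u A1 A2 v a1 a2 x
        + t ^ 2 • energyFieldQuadraticCoeff ε v a1 a2 x := by
  simp only [energyField, curv_add_smul (hA1 x) (hA2 x) (ha1 x) (ha2 x), hfun_add_smul,
    D1_eq_covDeriv, D2_eq_covDeriv, covDeriv_add_smul (hu x) (hv x)]
  ext i
  fin_cases i <;>
    simp only [energyFieldLinearCoeff, energyFieldQuadraticCoeff, D1_eq_covDeriv, D2_eq_covDeriv,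
      PiLp.add_apply, PiLp.smul_apply, real_smul, Fin.reduceFinMk, Fin.zero_eta, Fin.mk_one,
      Matrix.cons_val] <;>
    push_cast <;>
    ring

lemma continuous_energyField (hu : ContDiff ℝ 1 u) (hA1 : ContDiff ℝ 1 A1)
    (hA2 : ContDiff ℝ 1 A2) : Continuous (energyField ε u A1 A2) := by
  have := hu.continuous
  have := continuous_curv hA1 hA2
  have : Continuous (D1 A1 u) := continuous_covDeriv hA1.continuous hu
  have : Continuous (D2 A2 u) := continuous_covDeriv hA2.continuous hu
  unfold energyField hfun
  fun_prop

lemma continuous_energyFieldLinearCoeff (hu : Continuous u) (hA1 : Continuous A1)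
    (hA2 : Continuous A2) (hv : ContDiff ℝ 1 v) (ha1 : ContDiff ℝ 1 a1)
    (ha2 : ContDiff ℝ 1 a2) : Continuous (energyFieldLinearCoeff ε u A1 A2 v a1 a2) := by
  have := hv.continuous
  have := ha1.continuous
  have := ha2.continuous
  have := continuous_curv ha1 ha2
  have : Continuous (D1 A1 v) := continuous_covDeriv hA1 hv
  have : Continuous (D2 A2 v) := continuous_covDeriv hA2 hv
  unfold energyFieldLinearCoeff
  fun_prop

lemma continuous_energyFieldQuadraticCoeff (hv : Continuous v) (ha1 : Continuous a1)
    (ha2 : Continuous a2) : Continuous (energyFieldQuadraticCoeff ε v a1 a2) := by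
  unfold energyFieldQuadraticCoeff
  fun_prop

lemma secondVariationDensity_eq_norm_sq_add_inner (x : ℝ × ℝ) :
    secondVariationDensity ε u A1 A2 v a1 a2 x =
      2 * ‖energyFieldLinearCoeff ε u A1 A2 v a1 a2 x‖ ^ 2
        + 4 * ⟪energyField ε u A1 A2 x, energyFieldQuadraticCoeff ε v a1 a2 x⟫_ℝ := by
  have kinetic1 :=
    two_mul_norm_sub_sq_add_four_mul_inner (D1 A1 u x) (D1 A1 v x) (u x) (v x) (a1 x)
  have kinetic2 :=
    two_mul_norm_sub_sq_add_four_mul_inner (D2 A2 u x) (D2 A2 v x) (u x) (v x) (a2 x)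
  have potential : 2 * (ε * ((u x * conj (v x)).re / ε ^ 2)) ^ 2
      - 4 * (ε * hfun ε u x * (ε * (‖v x‖ ^ 2 / (2 * ε ^ 2)))) =
      (‖u x‖ ^ 2 - 1) / ε ^ 2 * ‖v x‖ ^ 2 + 2 / ε ^ 2 * (u x * conj (v x)).re ^ 2 := by
    simp only [hfun]
    field_simp
    ring
  rw [EuclideanSpace.norm_sq_eq, PiLp.inner_apply, Fin.sum_univ_four, Fin.sum_univ_four]
  simp only [secondVariationDensity, energyField, energyFieldLinearCoeff,
    energyFieldQuadraticCoeff, curv, Matrix.cons_val, norm_real, Real.norm_eq_abs, sq_abs,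
    inner_zero_right, inner_ofReal_ofReal]
  linear_combination -kinetic1 - kinetic2 - potential

theorem second_variation_formula_general (_hε : ε ≠ 0) {K : Set (ℝ × ℝ)} (hK : IsCompact K)
    (hu : ContDiff ℝ 1 u) (hA1 : ContDiff ℝ 1 A1) (hA2 : ContDiff ℝ 1 A2)
    (hv : ContDiff ℝ 1 v) (ha1 : ContDiff ℝ 1 a1) (ha2 : ContDiff ℝ 1 a2) :
    iteratedDeriv 2 (fun t : ℝ => ∫ x in K, energyDensity ε (fun x => u x + t • v x)
        (fun x => A1 x + t * a1 x) (fun x => A2 x + t * a2 x) x) 0 =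
      ∫ x in K, secondVariationDensity ε u A1 A2 v a1 a2 x := by
  simp only [energyDensity_eq_norm_sq, secondVariationDensity_eq_norm_sq_add_inner,
    energyField_add_smul hu.differentiable_one hA1.differentiable_one hA2.differentiable_one
      hv.differentiable_one ha1.differentiable_one ha2.differentiable_one]
  exact iteratedDeriv_two_integral_norm_sq_quadratic
    (memLp_restrict_of_isCompact hK (continuous_energyField hu hA1 hA2).continuousOn 2)
    (memLp_restrict_of_isCompact hK (continuous_energyFieldLinearCoeff hu.continuous
      hA1.continuous hA2.continuous hv ha1 ha2).continuousOn 2)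
    (memLp_restrict_of_isCompact hK (continuous_energyFieldQuadraticCoeff hv.continuous
      ha1.continuous ha2.continuous).continuousOn 2)

end Variation

/-- Second variation formula for the Yang--Mills--Higgs energy on the flat torus. -/
theorem second_variation_formula
    (ε : ℝ) (hε : 0 < ε) (u : ℝ × ℝ → ℂ) (A1 A2 : ℝ × ℝ → ℝ)
    (hu : ContDiff ℝ (⊤ : ℕ∞) u) (hup : Periodic2 u)
    (hA1 : ContDiff ℝ (⊤ : ℕ∞) A1) (hA1p : Periodic2 A1)
    (hA2 : ContDiff ℝ (⊤ : ℕ∞) A2) (hA2p : Periodic2 A2)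
    (v : ℝ × ℝ → ℂ) (a1 a2 : ℝ × ℝ → ℝ)
    (hv : ContDiff ℝ (⊤ : ℕ∞) v) (hvp : Periodic2 v)
    (ha1 : ContDiff ℝ (⊤ : ℕ∞) a1) (ha1p : Periodic2 a1)
    (ha2 : ContDiff ℝ (⊤ : ℕ∞) a2) (ha2p : Periodic2 a2) :
    iteratedDeriv 2 (fun t : ℝ =>
        energy ε (fun x => u x + t • v x)
          (fun x => A1 x + t * a1 x) (fun x => A2 x + t * a2 x)) 0 =
      ∫ x in Set.Icc (0:ℝ) 1 ×ˢ Set.Icc (0:ℝ) 1,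
        (2 * ε ^ 2 * (pd1 a2 x - pd2 a1 x) ^ 2
          + 2 * (‖D1 A1 v x‖ ^ 2 + ‖D2 A2 v x‖ ^ 2)
          - 4 * (a1 x * ((Complex.I * u x * (starRingEnd ℂ) (D1 A1 v x)).re
                          + (Complex.I * v x * (starRingEnd ℂ) (D1 A1 u x)).re)
                + a2 x * ((Complex.I * u x * (starRingEnd ℂ) (D2 A2 v x)).re
                          + (Complex.I * v x * (starRingEnd ℂ) (D2 A2 u x)).re))
          + 2 * ‖u x‖ ^ 2 * (a1 x ^ 2 + a2 x ^ 2)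
          + (‖u x‖ ^ 2 - 1) / ε ^ 2 * ‖v x‖ ^ 2
          + 2 / ε ^ 2 * (u x * (starRingEnd ℂ) (v x)).re ^ 2) := by
  exact second_variation_formula_general hε.ne' (isCompact_Icc.prod isCompact_Icc)
    (hu.of_le (by simp)) (hA1.of_le (by simp)) (hA2.of_le (by simp))
    (hv.of_le (by simp)) (ha1.of_le (by simp)) (ha2.of_le (by simp))
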